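/- Let z ∈ ℂ^N be such that the Laurent polynomial h(x) = Σ_{j=1}^N z_j x^{a(j)} on T = (ℂ*)^n is non-degenerate, and let b(1), …, b(n) ∈ A be elements forming a basis of the vector space ℝ^n. Then there exists an open dense subset U ⊆ ℂ^n such that for every α = (α_1, …, α_n) ∈ U the perturbed Laurent polynomial h̃(x) = h(x) − Σ_{i=1}^n α_i x^{b(i)} is non-degenerate and every critical point of h̃ in T is non-degenerate, i.e. at every x ∈ T with ∂h̃/∂x_1(x) = ⋯ = ∂h̃/∂x_n(x) = 0 the complex Hessian matrix (∂²h̃/∂x_j∂x_k(x))_{j,k=1}^n is invertible. -/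

import Mathlib

/-!
The good parameters contain the complement of a hypersurface in `ℂ^n`, which is open and dense. Both
kinds of bad parameters are projections to the `α`-space of algebraic subsets of `ℂ^n × T`, so by
`projSet_dichotomy` (Chevalley's theorem and the Nullstellensatz) each of them either lies in a
hypersurface or contains the complement of one; the second alternative is excluded analytically.

* Degenerate critical points. As the `b(k)` form a basis, the critical point equations of the
  perturbed polynomial can be solved for `α`: in the coordinates `x = exp u` they read `α = G u` for
  an explicit holomorphic `G : ℂ^n → ℂ^n`, and degenerate critical points are singular points of
  `G`. By Sard's theorem (`volume_critVals`) the bad parameters have measure zero, so they do not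
  contain a nonempty open set. The algebraic step is what gives an open good set: degenerate critical
  points may escape to infinity in the torus, so there is no compactness to appeal to.

* Degeneration on a face `F`. A set containing the complement of a hypersurface has `0` in its
  closure. But if critical points of the `F`-part existed for parameters tending to `0`, rescaling the
  monomials by the dominant one and passing to the limit would yield a critical point of the
  unperturbed polynomial on a subface of `F` (`zero_notMem_closure`). A subface of a face avoiding
  the origin avoids the origin too, so this contradicts the non-degeneracy of `h`.

There are finitely many faces, so the product of the resulting polynomials cuts out the hypersurface.
-/

open scoped BigOperators Classical
open MeasureTheory

noncomputable section

/-- The Laurent monomial `x^m = ∏ i, x i ^ m i` on the torus. -/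
def mon {n : ℕ} (m : Fin n → ℤ) (x : Fin n → ℂ) : ℂ := ∏ i, x i ^ m i

/-- The `i`-th partial derivative of a function on `ℂ^n`. -/
def pd {n : ℕ} (i : Fin n) (f : (Fin n → ℂ) → ℂ) (x : Fin n → ℂ) : ℂ :=
  fderiv ℂ f x (Pi.single i 1)

/-- The Laurent polynomial `h_z(x) = ∑ j, z j * x^{a j}`. -/
def laurent {n N : ℕ} (a : Fin N → Fin n → ℤ) (z : Fin N → ℂ) (x : Fin n → ℂ) : ℂ :=
  ∑ j, z j * mon (a j) x

/-- `Δ`, the convex hull of `A ∪ {0}` in `ℝ^n`. -/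
def ΔA {n N : ℕ} (a : Fin N → Fin n → ℤ) : Set (Fin n → ℝ) :=
  convexHull ℝ (insert 0 (Set.range fun j => fun i => (a j i : ℝ)))

/-- The minimum of the linear functional `⟨κ, ·⟩` over a (compact) set `Δ`. -/
def pairMin {n : ℕ} (Δ : Set (Fin n → ℝ)) (κ : Fin n → ℝ) : ℝ :=
  sInf ((fun v => ∑ i, κ i * v i) '' Δ)

/-- The `Γ(κ)`-part of `h_z`: the sum of the terms whose exponents lie on the
supporting face `Γ(κ) = {b ∈ Δ : ⟨κ,b⟩ = min_Δ ⟨κ,·⟩}` of `κ` in `Δ`. -/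
def facePart {n N : ℕ} (a : Fin N → Fin n → ℤ) (z : Fin N → ℂ) (κ : Fin n → ℝ)
    (x : Fin n → ℂ) : ℂ :=
  ∑ j, if (∑ i, κ i * (a j i : ℝ)) = pairMin (ΔA a) κ then z j * mon (a j) x else 0

/-- Non-degeneracy of the Laurent polynomial `h_z`: for every nonzero `κ ∈ ℝ^n`
whose supporting face does not contain the origin (i.e. `min_Δ ⟨κ,·⟩ < 0`), the
partial derivatives of the `Γ(κ)`-part have no common zero in `T = (ℂ*)^n`. -/
def NonDeg {n N : ℕ} (a : Fin N → Fin n → ℤ) (z : Fin N → ℂ) : Prop :=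
  ∀ κ : Fin n → ℝ, κ ≠ 0 → pairMin (ΔA a) κ < 0 →
    ¬ ∃ x : Fin n → ℂ, (∀ i, x i ≠ 0) ∧ ∀ i, pd i (facePart a z κ) x = 0

/-- The determinant of the complex Hessian matrix of `f` at `x`. -/
def hessDet {n : ℕ} (f : (Fin n → ℂ) → ℂ) (x : Fin n → ℂ) : ℂ :=
  Matrix.det (Matrix.of fun j k => pd j (fun y => pd k f y) x)

/-! ### Projections of algebraic sets -/

/-- The projection to `ℂ^σ` of the affine algebraic subset of `ℂ^σ × ℂ^τ` cut out by `E`. -/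
def projSet {σ τ : Type} (E : Set (MvPolynomial (σ ⊕ τ) ℂ)) : Set (σ → ℂ) :=
  {α | ∃ t : τ → ℂ, ∀ f ∈ E, MvPolynomial.eval (Sum.elim α t) f = 0}

/-- The projection of an algebraic set either lies in a hypersurface or contains the complement
of one. If some nonzero polynomial in `α` lies in the ideal generated by `E`, it vanishes on the
projection. Otherwise `Spec` of the coordinate ring dominates affine space, so by Chevalley's
theorem its image contains a nonempty basic open set, and the Nullstellensatz produces a point
above every closed point of that basic open set. -/
theorem projSet_dichotomy {σ τ : Type} [Finite σ] [Finite τ]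
    (E : Set (MvPolynomial (σ ⊕ τ) ℂ)) :
    (∃ P : MvPolynomial σ ℂ, P ≠ 0 ∧ ∀ α ∈ projSet E, MvPolynomial.eval α P = 0) ∨
    (∃ P : MvPolynomial σ ℂ, P ≠ 0 ∧ ∀ α, MvPolynomial.eval α P ≠ 0 → α ∈ projSet E) := by
  let I := Ideal.span E
  let ι : MvPolynomial σ ℂ →+* MvPolynomial (σ ⊕ τ) ℂ :=
    (MvPolynomial.rename (R := ℂ) (Sum.inl : σ → σ ⊕ τ)).toRingHom
  let f : MvPolynomial σ ℂ →+* MvPolynomial (σ ⊕ τ) ℂ ⧸ I := (Ideal.Quotient.mk I).comp ι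
  by_cases hker : RingHom.ker f = ⊥
  · right
    have hfp : f.FinitePresentation := by
      rw [← RingHom.FinitePresentation.of_finiteType]
      apply RingHom.FiniteType.of_comp_finiteType (f := MvPolynomial.C)
      have h1 : f.comp MvPolynomial.C = algebraMap ℂ (MvPolynomial (σ ⊕ τ) ℂ ⧸ I) := by
        ext x
        simp only [f, ι, RingHom.comp_apply]
        erw [MvPolynomial.rename_C]
        rfl
      rw [h1, RingHom.finiteType_algebraMap]
      infer_instance
    have hdense : DenseRange (PrimeSpectrum.comap f) := by
      rw [PrimeSpectrum.denseRange_comap_iff_ker_le_nilRadical, hker]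
      exact bot_le
    rw [PrimeSpectrum.denseRange_comap_iff_minimalPrimes] at hdense
    have hbot := hdense ⊥ (by
      rw [IsDomain.minimalPrimes_eq_singleton_bot]; rfl)
    obtain ⟨S, hS⟩ := PrimeSpectrum.exists_constructibleSetData_iff.mpr
      (PrimeSpectrum.isConstructible_range_comap hfp)
    rw [← hS] at hbot
    simp only [PrimeSpectrum.ConstructibleSetData.toSet, Set.mem_iUnion] at hbot
    -- the locally closed piece `V(g) ∩ D(f)` containing the generic point has all `g = 0`
    obtain ⟨C, hC, hCg, hCf⟩ := hbot
    refine ⟨C.f, ?_, ?_⟩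
    · intro h0
      apply hCf
      simp [h0]
    · intro α hα
      let p : PrimeSpectrum (MvPolynomial σ ℂ) :=
        ⟨RingHom.ker (MvPolynomial.eval α), RingHom.ker_isPrime _⟩
      have hp : p ∈ Set.range (PrimeSpectrum.comap f) := by
        rw [← hS]
        simp only [PrimeSpectrum.ConstructibleSetData.toSet, Set.mem_iUnion]
        refine ⟨C, hC, ?_, ?_⟩
        · intro x hx
          have : x = 0 := by simpa using hCg hx
          rw [this]; exact p.asIdeal.zero_mem
        · intro h
          apply hα
          have := h (Set.mem_singleton _)
          exact this
      obtain ⟨q, hq⟩ := hp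
      let Q : Ideal (MvPolynomial (σ ⊕ τ) ℂ) := q.asIdeal.comap (Ideal.Quotient.mk I)
      have hQ : Q ≠ ⊤ := (Ideal.comap_isPrime _ _ : Q.IsPrime).ne_top
      obtain ⟨M, hM, hQM⟩ := Ideal.exists_le_maximal Q hQ
      obtain ⟨t, ht⟩ := MvPolynomial.eq_vanishingIdeal_singleton_of_isMaximal ℂ hM
      have hev : ∀ g ∈ Q, MvPolynomial.eval t g = 0 := by
        intro g hg
        have := hQM hg
        rw [ht] at this
        simpa [MvPolynomial.aeval_eq_eval] using this t rfl
      have hα' : ∀ i, t (Sum.inl i) = α i := by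
        intro i
        have h1 : (MvPolynomial.X i - MvPolynomial.C (α i)) ∈ p.asIdeal := by
          simp [p, RingHom.mem_ker]
        rw [← hq] at h1
        have h2 : ι (MvPolynomial.X i - MvPolynomial.C (α i)) ∈ Q := h1
        have h3 := hev _ h2
        simp only [ι, map_sub] at h3
        erw [MvPolynomial.rename_X, MvPolynomial.rename_C] at h3
        simpa [sub_eq_zero] using h3
      refine ⟨t ∘ Sum.inr, fun g hg => ?_⟩
      have : Sum.elim α (t ∘ Sum.inr) = t := by
        ext s; rcases s with i | i <;> simp [hα']
      rw [this]
      apply hev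
      change Ideal.Quotient.mk I g ∈ q.asIdeal
      rw [Ideal.Quotient.eq_zero_iff_mem.mpr (Ideal.subset_span hg)]
      exact q.asIdeal.zero_mem
  · left
    obtain ⟨P, hP, hP0⟩ := Submodule.exists_mem_ne_zero_of_ne_bot hker
    refine ⟨P, hP0, ?_⟩
    rintro α ⟨t, ht⟩
    have h1 : ι P ∈ I := Ideal.Quotient.eq_zero_iff_mem.mp hP
    have h2 : I ≤ RingHom.ker (MvPolynomial.eval (Sum.elim α t)) :=
      Ideal.span_le.mpr fun g hg => ht g hg
    have h3 : MvPolynomial.eval (Sum.elim α t) (MvPolynomial.rename Sum.inl P) = 0 := h2 h1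
    rw [MvPolynomial.eval_rename] at h3
    exact h3

theorem isOpen_nonvanishing {σ : Type} (P : MvPolynomial σ ℂ) :
    IsOpen {α : σ → ℂ | MvPolynomial.eval α P ≠ 0} :=
  isOpen_ne_fun (MvPolynomial.continuous_eval P) continuous_const

/-- A nonzero polynomial cannot vanish on a nonempty open set, since such a set contains a box
with infinite sides. -/
theorem dense_nonvanishing {σ : Type} [Finite σ] {P : MvPolynomial σ ℂ} (hP : P ≠ 0) :
    Dense {α : σ → ℂ | MvPolynomial.eval α P ≠ 0} := by
  have := Fintype.ofFinite σ
  rw [dense_iff_inter_open]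
  intro V hV ⟨v, hv⟩
  obtain ⟨I, u, hu, huV⟩ := isOpen_pi_iff.mp hV v hv
  by_contra hne
  apply hP
  have hinf : ∀ i, ∃ s : Set ℂ, s.Infinite ∧ ∀ x ∈ s, i ∈ I → x ∈ u i := by
    intro i
    by_cases hi : i ∈ I
    · refine ⟨u i, ?_, fun x hx _ => hx⟩
      exact infinite_of_mem_nhds (v i) ((hu i hi).1.mem_nhds (hu i hi).2)
    · exact ⟨Set.univ, Set.infinite_univ, fun x _ h => absurd h hi⟩
  choose s hs hsu using hinf
  refine MvPolynomial.funext_set (p := P) (q := 0) s hs fun x hx => ?_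
  by_contra h
  exact hne ⟨x, huV fun i hi => hsu i _ (hx i trivial) hi, by simpa using h⟩

/-! ### Derivatives of Laurent polynomials on the torus -/

theorem mon_ne_zero {n : ℕ} (m : Fin n → ℤ) {x : Fin n → ℂ} (hx : ∀ i, x i ≠ 0) :
    mon m x ≠ 0 :=
  Finset.prod_ne_zero_iff.mpr fun i _ => zpow_ne_zero _ (hx i)

theorem mon_mul {n : ℕ} (m : Fin n → ℤ) (x y : Fin n → ℂ) :
    mon m (fun i => x i * y i) = mon m x * mon m y := by
  simp [mon, mul_zpow, Finset.prod_mul_distrib]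

theorem mon_sub_single {n : ℕ} (m : Fin n → ℤ) (k : Fin n) {x : Fin n → ℂ}
    (hx : ∀ i, x i ≠ 0) : mon (m - Pi.single k 1) x = mon m x / x k := by
  have h : ∀ i, x i ^ ((m - Pi.single k 1 : Fin n → ℤ) i) = x i ^ m i * (if i = k then (x k)⁻¹ else 1) := by
    intro i
    by_cases hi : i = k
    · subst hi; simp [zpow_sub₀ (hx i), div_eq_mul_inv]
    · simp [hi]
  simp only [mon, h, Finset.prod_mul_distrib, Finset.prod_ite_eq', Finset.mem_univ, if_true,
    div_eq_mul_inv]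

theorem mon_exp {n : ℕ} (m : Fin n → ℤ) (u : Fin n → ℂ) :
    mon m (fun i => Complex.exp (u i)) = Complex.exp (∑ i, (m i : ℂ) * u i) := by
  simp [mon, Complex.exp_sum, Complex.exp_int_mul]

theorem hasFDerivAt_mon {n : ℕ} (m : Fin n → ℤ) {x : Fin n → ℂ} (hx : ∀ i, x i ≠ 0) :
    HasFDerivAt (mon m)
      (∑ i, (∏ j ∈ Finset.univ.erase i, x j ^ m j) •
        (((m i : ℂ) * x i ^ (m i - 1)) •
          (ContinuousLinearMap.proj i : (Fin n → ℂ) →L[ℂ] ℂ))) x := by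
  have h : ∀ i ∈ (Finset.univ : Finset (Fin n)), HasFDerivAt (fun y : Fin n → ℂ => y i ^ m i)
      (((m i : ℂ) * x i ^ (m i - 1)) • (ContinuousLinearMap.proj i : (Fin n → ℂ) →L[ℂ] ℂ)) x :=
    fun i _ => HasDerivAt.comp_hasFDerivAt (h₂ := fun w : ℂ => w ^ m i)
      (f := fun y : Fin n → ℂ => y i) x
      (hasDerivAt_zpow (m i) (x i) (Or.inl (hx i))) (hasFDerivAt_apply i x)
  exact HasFDerivAt.finsetProd h

theorem pd_mon {n : ℕ} (m : Fin n → ℤ) (k : Fin n) {x : Fin n → ℂ} (hx : ∀ i, x i ≠ 0) :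
    pd k (mon m) x = m k * mon (m - Pi.single k 1) x := by
  rw [pd, (hasFDerivAt_mon m hx).fderiv, mon_sub_single m k hx]
  simp only [sum_apply, smul_apply,
    ContinuousLinearMap.proj_apply, smul_eq_mul]
  rw [Finset.sum_eq_single k]
  · rw [mon, ← Finset.mul_prod_erase _ _ (Finset.mem_univ k), zpow_sub_one₀ (hx k)]
    simp only [Pi.single_eq_same]
    field_simp
  · intro i _ hik
    simp [hik]
  · simp

theorem pd_laurent {n N : ℕ} (a : Fin N → Fin n → ℤ) (c : Fin N → ℂ) (k : Fin n)
    {x : Fin n → ℂ} (hx : ∀ i, x i ≠ 0) :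
    pd k (laurent a c) x =
      laurent (fun j => a j - Pi.single k 1) (fun j => c j * a j k) x := by
  have hd : ∀ j ∈ (Finset.univ : Finset (Fin N)),
      DifferentiableAt ℂ (fun y => c j * mon (a j) y) x :=
    fun j _ => (hasFDerivAt_mon (a j) hx).differentiableAt.const_mul _
  have h1 : laurent a c = fun y => ∑ j, c j * mon (a j) y := rfl
  rw [pd, h1, fderiv_fun_sum hd]
  simp only [sum_apply, laurent]
  refine Finset.sum_congr rfl fun j _ => ?_
  rw [fderiv_const_mul (hasFDerivAt_mon (a j) hx).differentiableAt]
  have := pd_mon (a j) k hx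
  rw [pd] at this
  simp [this, mul_assoc]

theorem pd_laurent_eq_zero_iff {n N : ℕ} (a : Fin N → Fin n → ℤ) (c : Fin N → ℂ) (k : Fin n)
    {x : Fin n → ℂ} (hx : ∀ i, x i ≠ 0) :
    pd k (laurent a c) x = 0 ↔ ∑ j, c j * a j k * mon (a j) x = 0 := by
  rw [pd_laurent a c k hx]
  simp only [laurent, mon_sub_single _ k hx, ← mul_div_assoc, ← Finset.sum_div]
  simp [hx k]

theorem pd_pd_laurent {n N : ℕ} (a : Fin N → Fin n → ℤ) (c : Fin N → ℂ) (j k : Fin n)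
    {x : Fin n → ℂ} (hx : ∀ i, x i ≠ 0) :
    pd j (fun y => pd k (laurent a c) y) x =
      ∑ l, c l * a l k * ((a l j : ℂ) - if j = k then 1 else 0) * (mon (a l) x / x k / x j) := by
  have hev : (fun y => pd k (laurent a c) y) =ᶠ[nhds x]
      laurent (fun j => a j - Pi.single k 1) (fun j => c j * a j k) := by
    have : ∀ᶠ y in nhds x, ∀ i, y i ≠ 0 :=
      Filter.eventually_all.mpr fun i =>
        (continuous_apply i).continuousAt.eventually_ne (hx i)
    filter_upwards [this] with y hy using pd_laurent a c k hy
  rw [pd, hev.fderiv_eq, ← pd, pd_laurent _ _ _ hx, laurent]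
  refine Finset.sum_congr rfl fun l _ => ?_
  rw [mon_sub_single _ j hx, mon_sub_single _ k hx]
  congr 2
  by_cases h : j = k <;> simp [h]

/-- The Hessian of `∑ c_l x^{a_l}` in logarithmic coordinates, i.e. with respect to the
operators `x_i ∂/∂x_i`. -/
def logHess {n N : ℕ} (a : Fin N → Fin n → ℤ) (c : Fin N → ℂ) (x : Fin n → ℂ) :
    Matrix (Fin n) (Fin n) ℂ :=
  Matrix.of fun j k => ∑ l, c l * a l k * a l j * mon (a l) x

/-- At a critical point the logarithmic Hessian is `D H D` with `H` the usual Hessian and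
`D = diag(x)`, the first-order correction terms being zero. -/
theorem det_logHess_eq_zero {n N : ℕ} (a : Fin N → Fin n → ℤ) (c : Fin N → ℂ)
    {x : Fin n → ℂ} (hx : ∀ i, x i ≠ 0) (hcrit : ∀ i, pd i (laurent a c) x = 0)
    (hh : hessDet (laurent a c) x = 0) : (logHess a c x).det = 0 := by
  have key : logHess a c x = Matrix.diagonal x *
      (Matrix.of fun j k => pd j (fun y => pd k (laurent a c) y) x) * Matrix.diagonal x := by
    ext j k
    rw [Matrix.mul_diagonal, Matrix.diagonal_mul, Matrix.of_apply, pd_pd_laurent a c j k hx]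
    have h0 := (pd_laurent_eq_zero_iff a c k hx).mp (hcrit k)
    have : (∑ l, c l * a l k * ((a l j : ℂ) - if j = k then 1 else 0) *
        (mon (a l) x / x k / x j)) =
        ((∑ l, c l * a l k * a l j * mon (a l) x) -
          (if j = k then 1 else 0) * ∑ l, c l * a l k * mon (a l) x) / (x j * x k) := by
      rw [Finset.mul_sum, ← Finset.sum_sub_distrib, Finset.sum_div]
      refine Finset.sum_congr rfl fun l _ => ?_
      have := hx j
      have := hx k
      field_simp
    rw [this, h0, logHess, Matrix.of_apply]
    have := hx j
    have := hx k
    field_simp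
    simp
  rw [hessDet] at hh
  rw [key, Matrix.det_mul, Matrix.det_mul, hh]
  simp

/-! ### Sard's theorem for degenerate critical points -/

/-- The coefficients of the perturbed Laurent polynomial. -/
def pcoef {n N : ℕ} (z : Fin N → ℂ) (bv : Fin n → Fin N) (α : Fin n → ℂ) (j : Fin N) : ℂ :=
  z j - ∑ i, if bv i = j then α i else 0

theorem sum_pcoef_mul {n N : ℕ} (z : Fin N → ℂ) (bv : Fin n → Fin N) (α : Fin n → ℂ)
    (f : Fin N → ℂ) :
    ∑ j, pcoef z bv α j * f j = ∑ j, z j * f j - ∑ k, α k * f (bv k) := by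
  simp only [pcoef, sub_mul, Finset.sum_sub_distrib, Finset.sum_mul]
  rw [Finset.sum_comm]
  simp [ite_mul]

/-- The parameters `α` for which the perturbed Laurent polynomial has a degenerate critical
point, the two conditions being written in logarithmic coordinates. -/
def critVals {n N : ℕ} (a : Fin N → Fin n → ℤ) (z : Fin N → ℂ) (bv : Fin n → Fin N) :
    Set (Fin n → ℂ) :=
  {α | ∃ x : Fin n → ℂ, (∀ i, x i ≠ 0) ∧
    (∀ i, ∑ j, pcoef z bv α j * a j i * mon (a j) x = 0) ∧
    (logHess a (pcoef z bv α) x).det = 0}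

/-- The matrix with rows `b(1), …, b(n)` is invertible over `ℂ`. -/
theorem exists_coords {n N : ℕ} (a : Fin N → Fin n → ℤ) (bv : Fin n → Fin N)
    (hbv : LinearIndependent ℝ fun i => fun j => (a (bv i) j : ℝ)) :
    ∃ B' : Matrix (Fin n) (Fin n) ℂ,
      (Matrix.of fun k i => (a (bv k) i : ℂ)) * B' = 1 ∧
      B' * (Matrix.of fun k i => (a (bv k) i : ℂ)) = 1 := by
  let B : Matrix (Fin n) (Fin n) ℝ := Matrix.of fun k i => (a (bv k) i : ℝ)
  have hB : IsUnit B := Matrix.linearIndependent_rows_iff_isUnit.mp hbv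
  have hC : (Matrix.of fun k i => (a (bv k) i : ℂ)) = (Complex.ofRealHom.mapMatrix B) := by
    ext i j; simp [B]
  rw [hC]
  obtain ⟨B', hB'⟩ := (hB.map (Complex.ofRealHom.mapMatrix)).exists_right_inv
  exact ⟨B', hB', mul_eq_one_comm.mp hB'⟩

/-- Solving the critical point equations for `α`, with `x = exp u`, gives `α = G u` for an
exponential sum `G`, and the critical point is degenerate only where `dG` is singular, so that
Sard's theorem applies. -/
theorem volume_critVals {n N : ℕ} (a : Fin N → Fin n → ℤ) (z : Fin N → ℂ)
    (bv : Fin n → Fin N)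
    (hbv : LinearIndependent ℝ fun i => fun j => (a (bv i) j : ℝ)) :
    volume (critVals a z bv) = 0 := by
  obtain ⟨B', hBB', hB'B⟩ := exists_coords a bv hbv
  set B : Matrix (Fin n) (Fin n) ℂ := Matrix.of fun k i => (a (bv k) i : ℂ) with hBdef
  -- `w j` is the coordinate vector of `a j` in the basis `b(1), …, b(n)`.
  let w : Fin N → Fin n → ℂ := fun j => Matrix.vecMul (fun i => (a j i : ℂ)) B'
  have hwb : ∀ l k, w (bv l) k = if l = k then 1 else 0 := by
    intro l k
    have : (B * B') l k = (1 : Matrix (Fin n) (Fin n) ℂ) l k := by rw [hBB']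
    rw [Matrix.one_apply] at this
    exact this
  let pr : Fin N → (Fin n → ℂ) → ℂ := fun j u => ∑ i, (a j i : ℂ) * u i
  -- A critical point `exp u` of the perturbed polynomial is one with `G u = α`.
  let G : (Fin n → ℂ) → (Fin n → ℂ) := fun u k =>
    ∑ j, z j * w j k * Complex.exp (pr j u - pr (bv k) u)
  let prL : Fin N → (Fin n → ℂ) →L[ℂ] ℂ := fun j =>
    ∑ i, (a j i : ℂ) • (ContinuousLinearMap.proj i : (Fin n → ℂ) →L[ℂ] ℂ)
  have hprL : ∀ j u, prL j u = pr j u := by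
    intro j u; simp [prL, pr]
  have hpr : ∀ j u, HasFDerivAt (pr j) (prL j) u := by
    intro j u
    have : pr j = prL j := by ext v; exact (hprL j v).symm
    rw [this]; exact (prL j).hasFDerivAt
  let G' : (Fin n → ℂ) → (Fin n → ℂ) →L[ℂ] (Fin n → ℂ) := fun u =>
    ContinuousLinearMap.pi fun k =>
      ∑ j, (z j * w j k) • (Complex.exp (pr j u - pr (bv k) u) • (prL j - prL (bv k)))
  have hG : ∀ u, HasFDerivAt G (G' u) u := by
    intro u
    rw [hasFDerivAt_pi]
    intro k
    refine HasFDerivAt.fun_sum fun j _ => ?_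
    exact (((hpr j u).sub (hpr (bv k) u)).cexp).const_mul _
  have hG'v : ∀ u v k, G' u v k =
      ∑ j, z j * w j k * (Complex.exp (pr j u - pr (bv k) u) * (pr j v - pr (bv k) v)) := by
    intro u v k
    simp [G', hprL]
  let S : Set (Fin n → ℂ) := {u | ((G' u).restrictScalars ℝ).det = 0}
  have hsard : volume (G '' S) = 0 :=
    addHaar_image_eq_zero_of_det_fderivWithin_eq_zero volume
      (fun u _ => ((hG u).restrictScalars ℝ).hasFDerivWithinAt) (fun u hu => hu)
  refine measure_mono_null ?_ hsard
  rintro α ⟨x, hx, hcrit, hdet⟩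
  have hu : ∃ u : Fin n → ℂ, x = fun i => Complex.exp (u i) :=
    ⟨fun i => Complex.log (x i), by ext i; rw [Complex.exp_log (hx i)]⟩
  obtain ⟨u, rfl⟩ := hu
  have hm : ∀ j, mon (a j) (fun i => Complex.exp (u i)) = Complex.exp (pr j u) :=
    fun j => mon_exp _ _
  simp only [hm] at hcrit
  -- Any vector relation between the exponents passes to the coordinates in the basis.
  have hcoord : ∀ f : Fin N → ℂ,
      (∀ i, ∑ j, pcoef z bv α j * a j i * f j = 0) →
      ∀ k, ∑ j, z j * w j k * f j = α k * f (bv k) := by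
    intro f hf k
    have h1 : ∑ j, pcoef z bv α j * (w j k * f j) = 0 := by
      have : ∀ j, pcoef z bv α j * (w j k * f j) =
          ∑ i, (pcoef z bv α j * a j i * f j) * B' i k := by
        intro j
        simp only [w, Matrix.vecMul, dotProduct, Finset.sum_mul, Finset.mul_sum]
        exact Finset.sum_congr rfl fun i _ => by ring
      simp only [this]
      rw [Finset.sum_comm]
      simp only [← Finset.sum_mul, hf, zero_mul, Finset.sum_const_zero]
    rw [sum_pcoef_mul] at h1
    have h2 : ∑ l, α l * (w (bv l) k * f (bv l)) = α k * f (bv k) := by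
      simp [hwb]
    rw [h2] at h1
    rw [← sub_eq_zero, ← h1]
    congr 1
    exact Finset.sum_congr rfl fun j _ => by ring
  have hGu : ∀ k, G u k = α k := by
    intro k
    have h := hcoord _ hcrit k
    have : G u k = (∑ j, z j * w j k * Complex.exp (pr j u)) * Complex.exp (-pr (bv k) u) := by
      simp only [G, Finset.sum_mul]
      exact Finset.sum_congr rfl fun j _ => by rw [sub_eq_add_neg, Complex.exp_add]; ring
    rw [this, h, mul_assoc, ← Complex.exp_add]
    simp
  refine ⟨u, ?_, funext hGu⟩
  obtain ⟨v, hv0, hv⟩ := Matrix.exists_mulVec_eq_zero_iff.mpr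
    ((Matrix.det_transpose _).trans hdet)
  have hMv : ∀ k, ∑ j, z j * w j k * (pr j v * Complex.exp (pr j u)) =
      α k * (pr (bv k) v * Complex.exp (pr (bv k) u)) := by
    apply hcoord
    intro i
    have h := congrFun hv i
    simp only [Matrix.mulVec, dotProduct, Matrix.transpose_apply, logHess, Matrix.of_apply, hm,
      Pi.zero_apply] at h
    rw [← h]
    simp only [Finset.sum_mul]
    rw [Finset.sum_comm]
    refine Finset.sum_congr rfl fun j _ => ?_
    simp only [pr, Finset.sum_mul, Finset.mul_sum]
    exact Finset.sum_congr rfl fun i _ => by ring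
  -- a null vector of the logarithmic Hessian is a null vector of the derivative of `G`
  have hker : G' u v = 0 := by
    ext k
    rw [hG'v]
    have : ∑ j, z j * w j k * (Complex.exp (pr j u - pr (bv k) u) * (pr j v - pr (bv k) v)) =
        (∑ j, z j * w j k * (pr j v * Complex.exp (pr j u))) * Complex.exp (-pr (bv k) u) -
        G u k * pr (bv k) v := by
      simp only [G, Finset.sum_mul, ← Finset.sum_sub_distrib]
      exact Finset.sum_congr rfl fun j _ => by rw [sub_eq_add_neg, Complex.exp_add]; ring
    rw [this, hMv, hGu]
    have he : Complex.exp (pr (bv k) u) * Complex.exp (-pr (bv k) u) = 1 := by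
      rw [← Complex.exp_add]; simp
    simp only [Pi.zero_apply]
    linear_combination (α k * pr (bv k) v) * he
  change ((G' u).restrictScalars ℝ).det = 0
  by_contra hd
  have hinj := (LinearMap.equivOfDetNeZero _ hd).injective
  exact hv0 (hinj (a₁ := v) (a₂ := 0) (by
    change G' u v = G' u 0
    rw [hker, map_zero]))

/-! ### Faces of the Newton polytope -/

/-- `F` is the set of indices of the exponents lying on a face of `Δ` not containing the origin;
such a face is cut out by a covector `κ` whose minimum `m` over `Δ` is negative. -/
def IsFace {n N : ℕ} (a : Fin N → Fin n → ℤ) (F : Finset (Fin N)) : Prop :=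
  F.Nonempty ∧ ∃ (κ : Fin n → ℝ) (m : ℝ), m < 0 ∧
    (∀ j ∈ F, ∑ i, κ i * (a j i : ℝ) = m) ∧ ∀ j ∉ F, m < ∑ i, κ i * (a j i : ℝ)

/-- The part of the Laurent polynomial supported on `F` has a critical point in the torus. -/
def HasCrit {n N : ℕ} (a : Fin N → Fin n → ℤ) (c : Fin N → ℂ) (F : Finset (Fin N)) : Prop :=
  ∃ x : Fin n → ℂ, (∀ i, x i ≠ 0) ∧ ∀ i, ∑ j ∈ F, c j * a j i * mon (a j) x = 0

theorem le_of_mem_ΔA {n N : ℕ} (a : Fin N → Fin n → ℤ) (κ : Fin n → ℝ) {m : ℝ} (hm : m ≤ 0)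
    (h : ∀ j, m ≤ ∑ i, κ i * (a j i : ℝ)) {v : Fin n → ℝ} (hv : v ∈ ΔA a) :
    m ≤ ∑ i, κ i * v i := by
  have hconv : Convex ℝ {v : Fin n → ℝ | m ≤ ∑ i, κ i * v i} := by
    refine convex_halfSpace_ge (f := fun v : Fin n → ℝ => ∑ i, κ i * v i) ⟨?_, ?_⟩ m
    · intro x y; simp [mul_add, Finset.sum_add_distrib]
    · intro c x; simp only [Pi.smul_apply, smul_eq_mul, Finset.mul_sum]
      exact Finset.sum_congr rfl fun i _ => by ring
  refine convexHull_min ?_ hconv hv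
  rintro v (rfl | ⟨j, rfl⟩)
  · simpa using hm
  · exact h j

theorem pairMin_eq {n N : ℕ} (a : Fin N → Fin n → ℤ) (κ : Fin n → ℝ) {m : ℝ} (hm : m ≤ 0)
    (h : ∀ j, m ≤ ∑ i, κ i * (a j i : ℝ))
    (h' : m = 0 ∨ ∃ j, ∑ i, κ i * (a j i : ℝ) = m) : pairMin (ΔA a) κ = m := by
  refine IsLeast.csInf_eq ⟨?_, ?_⟩
  · rcases h' with rfl | ⟨j, hj⟩
    · exact ⟨0, subset_convexHull _ _ (Set.mem_insert _ _), by simp⟩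
    · exact ⟨_, subset_convexHull _ _ (Set.mem_insert_of_mem _ ⟨j, rfl⟩), hj⟩
  · rintro _ ⟨v, hv, rfl⟩
    exact le_of_mem_ΔA a κ hm h hv

/-- The minimum over `Δ` is attained at the origin or at one of the exponents. -/
theorem pairMin_spec {n N : ℕ} (a : Fin N → Fin n → ℤ) (κ : Fin n → ℝ) :
    (∀ j, pairMin (ΔA a) κ ≤ ∑ i, κ i * (a j i : ℝ)) ∧
    (pairMin (ΔA a) κ < 0 → ∃ j, ∑ i, κ i * (a j i : ℝ) = pairMin (ΔA a) κ) := by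
  by_cases hneg : ∃ j, ∑ i, κ i * (a j i : ℝ) < 0
  · obtain ⟨j₁, hj₁⟩ := hneg
    obtain ⟨j₀, -, hj₀⟩ := Finset.exists_min_image Finset.univ
      (fun j => ∑ i, κ i * (a j i : ℝ)) ⟨j₁, Finset.mem_univ _⟩
    have hj₀' := fun j => hj₀ j (Finset.mem_univ j)
    have := pairMin_eq a κ (le_of_lt ((hj₀' j₁).trans_lt hj₁)) hj₀' (Or.inr ⟨j₀, rfl⟩)
    rw [this]
    exact ⟨hj₀', fun _ => ⟨j₀, rfl⟩⟩
  · push Not at hneg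
    rw [pairMin_eq a κ le_rfl hneg (Or.inl rfl)]
    exact ⟨hneg, fun h => absurd h (lt_irrefl _)⟩

theorem facePart_crit_iff {n N : ℕ} (a : Fin N → Fin n → ℤ) (c : Fin N → ℂ) (κ : Fin n → ℝ) :
    (∃ x : Fin n → ℂ, (∀ i, x i ≠ 0) ∧ ∀ i, pd i (facePart a c κ) x = 0) ↔
    HasCrit a c (Finset.univ.filter fun j => ∑ i, κ i * (a j i : ℝ) = pairMin (ΔA a) κ) := by
  have h : facePart a c κ = laurent a fun j =>
      if (∑ i, κ i * (a j i : ℝ)) = pairMin (ΔA a) κ then c j else 0 := by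
    ext x
    simp [facePart, laurent, ite_mul]
  rw [h, HasCrit]
  refine exists_congr fun x => and_congr_right fun hx => forall_congr' fun i => ?_
  rw [pd_laurent_eq_zero_iff _ _ _ hx, Finset.sum_filter]
  simp [ite_mul]

/-- Non-degeneracy depends on the covectors only through the finitely many faces they cut out. -/
theorem nonDeg_iff {n N : ℕ} (a : Fin N → Fin n → ℤ) (c : Fin N → ℂ) :
    NonDeg a c ↔ ∀ F, IsFace a F → ¬ HasCrit a c F := by
  constructor
  · rintro h F ⟨⟨j₀, hj₀⟩, κ, m, hm, hF, hF'⟩ hcrit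
    have hmin : pairMin (ΔA a) κ = m := pairMin_eq a κ hm.le
      (fun j => by
        by_cases hj : j ∈ F
        · exact (hF j hj).ge
        · exact (hF' j hj).le) (Or.inr ⟨j₀, hF j₀ hj₀⟩)
    refine h κ ?_ (hmin ▸ hm) ((facePart_crit_iff a c κ).mpr ?_)
    · rintro rfl
      have := hF j₀ hj₀
      simp at this
      exact hm.ne this.symm
    · convert hcrit
      ext j
      simp only [Finset.mem_filter, Finset.mem_univ, true_and, hmin]
      exact ⟨fun h => by_contra fun hj => (hF' j hj).ne' h, hF j⟩
  · intro h κ _ hneg hcrit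
    refine h _ ?_ ((facePart_crit_iff a c κ).mp hcrit)
    obtain ⟨hle, hex⟩ := pairMin_spec a κ
    obtain ⟨j, hj⟩ := hex hneg
    refine ⟨⟨j, by simp [hj]⟩, κ, _, hneg, fun j hj => by simpa using hj, fun j hj => ?_⟩
    exact lt_of_le_of_ne (hle j) (fun h => hj (by simp [h]))

/-! ### Limits of critical points -/

/-- Polar coordinates on the torus. -/
theorem mon_polar {n : ℕ} (m : Fin n → ℤ) (s : Fin n → ℂ) (l : Fin n → ℝ) :
    mon m (fun i => s i * Complex.exp (l i)) =
      mon m s * (Real.exp (∑ i, l i * (m i : ℝ)) : ℂ) := by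
  rw [mon_mul m s (fun i => Complex.exp (l i)), mon_exp]
  push_cast
  congr 2
  exact Finset.sum_congr rfl fun i _ => mul_comm _ _

theorem exists_polar {n : ℕ} {x : Fin n → ℂ} (hx : ∀ i, x i ≠ 0) :
    ∃ (s : Fin n → ℂ) (l : Fin n → ℝ), (∀ i, ‖s i‖ = 1) ∧
      x = fun i => s i * Complex.exp (l i) := by
  refine ⟨fun i => x i / ‖x i‖, fun i => Real.log ‖x i‖, fun i => ?_, funext fun i => ?_⟩
  · simp [hx i]
  · have h0 : ‖x i‖ ≠ 0 := norm_ne_zero_iff.mpr (hx i)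
    rw [← Complex.ofReal_exp, Real.exp_log (norm_pos_iff.mpr (hx i))]
    have : (‖x i‖ : ℂ) ≠ 0 := by exact_mod_cast h0
    field_simp

theorem norm_mon_of_norm_one {n : ℕ} (m : Fin n → ℤ) {s : Fin n → ℂ} (hs : ∀ i, ‖s i‖ = 1) :
    ‖mon m s‖ = 1 := by
  simp [mon, hs]

theorem continuousAt_mon {n : ℕ} (m : Fin n → ℤ) {x : Fin n → ℂ} (hx : ∀ i, x i ≠ 0) :
    ContinuousAt (mon m) x :=
  (hasFDerivAt_mon m hx).continuousAt

/-- Every linear map between real coordinate spaces has a generalized inverse. -/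
theorem exists_generalized_inverse {n N : ℕ} (π : (Fin n → ℝ) →ₗ[ℝ] (Fin N → ℝ)) :
    ∃ g : (Fin N → ℝ) →ₗ[ℝ] (Fin n → ℝ), ∀ l, π (g (π l)) = π l := by
  obtain ⟨g₀, hg₀⟩ := LinearMap.exists_rightInverse_of_surjective π.rangeRestrict
    (LinearMap.range_rangeRestrict π)
  obtain ⟨g, hg⟩ := LinearMap.exists_extend g₀
  refine ⟨g, fun l => ?_⟩
  have h1 : g (π l) = g₀ (π.rangeRestrict l) := LinearMap.congr_fun hg (π.rangeRestrict l)
  have h2 := LinearMap.congr_fun hg₀ (π.rangeRestrict l)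
  rw [h1]
  exact congrArg Subtype.val h2

/-- A face of a face of `Δ` is a face of `Δ`: if `κ` cuts out `F` and `κ'` cuts out `F'` within `F`,
then `M κ + κ'` cuts out `F'` for large `M`. -/
theorem IsFace.subface {n N : ℕ} {a : Fin N → Fin n → ℤ} {F F' : Finset (Fin N)}
    (hF : IsFace a F) (hsub : F' ⊆ F) {j₀ : Fin N} (hj₀ : j₀ ∈ F') (κ' : Fin n → ℝ)
    (h1 : ∀ j ∈ F', ∑ i, κ' i * (a j i : ℝ) = ∑ i, κ' i * (a j₀ i : ℝ))
    (h2 : ∀ j ∈ F, j ∉ F' → ∑ i, κ' i * (a j₀ i : ℝ) < ∑ i, κ' i * (a j i : ℝ)) :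
    IsFace a F' := by
  obtain ⟨-, κ, m, hm, hFm, hFm'⟩ := hF
  have e1 : ∀ᶠ M : ℝ in Filter.atTop, M * m + ∑ i, κ' i * (a j₀ i : ℝ) < 0 := by
    filter_upwards [Filter.eventually_gt_atTop ((∑ i, κ' i * (a j₀ i : ℝ)) / (-m))] with M hM
    rw [div_lt_iff₀ (by linarith)] at hM
    linarith
  have e2 : ∀ᶠ M : ℝ in Filter.atTop, ∀ j, j ∉ F →
      M * m + ∑ i, κ' i * (a j₀ i : ℝ) <
        M * (∑ i, κ i * (a j i : ℝ)) + ∑ i, κ' i * (a j i : ℝ) := by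
    rw [Filter.eventually_all]
    intro j
    by_cases hj : j ∈ F
    · exact Filter.Eventually.of_forall fun _ h => absurd hj h
    · have hpos := sub_pos.mpr (hFm' j hj)
      filter_upwards [Filter.eventually_gt_atTop
        ((∑ i, κ' i * (a j₀ i : ℝ) - ∑ i, κ' i * (a j i : ℝ)) /
          ((∑ i, κ i * (a j i : ℝ)) - m))] with M hM _
      rw [div_lt_iff₀ hpos] at hM
      linarith
  obtain ⟨M, hM1, hM2⟩ := (e1.and e2).exists
  have hsum : ∀ j, ∑ i, (M * κ i + κ' i) * (a j i : ℝ) =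
      M * (∑ i, κ i * (a j i : ℝ)) + ∑ i, κ' i * (a j i : ℝ) := by
    intro j
    rw [Finset.mul_sum, ← Finset.sum_add_distrib]
    exact Finset.sum_congr rfl fun i _ => by ring
  refine ⟨⟨j₀, hj₀⟩, fun i => M * κ i + κ' i, M * m + ∑ i, κ' i * (a j₀ i : ℝ), hM1, ?_, ?_⟩
  · intro j hj
    rw [hsum, hFm j (hsub hj), h1 j hj]
  · intro j hj
    rw [hsum]
    by_cases hjF : j ∈ F
    · rw [hFm j hjF]
      linarith [h2 j hjF hj]
    · exact hM2 j hjF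

/-- If critical points `x` of the parts on `F` exist for parameters tending to `0`, then the vectors
of monomials `x^{a(j)}`, `j ∈ F`, normalized by the largest one, have a limit. Its support `F'` is a
face of `F`, and on `F'` the limit is proportional to `(x'^{a(j)})` for a torus point `x'`, which is
a critical point of the part of the unperturbed polynomial on `F'`. -/
theorem zero_notMem_closure {n N : ℕ} {a : Fin N → Fin n → ℤ} {z : Fin N → ℂ}
    (bv : Fin n → Fin N) {F : Finset (Fin N)} (hF : IsFace a F)
    (hnd : ∀ F', IsFace a F' → ¬ HasCrit a z F') :
    (0 : Fin n → ℂ) ∉ closure {α | HasCrit a (pcoef z bv α) F} := by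
  intro hcl
  obtain ⟨𝒰, hW, h𝒰⟩ := mem_closure_iff_ultrafilter.mp hcl
  have hpolar : ∀ α : Fin n → ℂ, ∃ (s : Fin n → ℂ) (l : Fin n → ℝ), (∀ i, ‖s i‖ = 1) ∧
      (HasCrit a (pcoef z bv α) F → ∀ i, ∑ j ∈ F, pcoef z bv α j * a j i *
        (mon (a j) s * (Real.exp (∑ i, l i * (a j i : ℝ)) : ℂ)) = 0) := by
    intro α
    by_cases hα : HasCrit a (pcoef z bv α) F
    · obtain ⟨x, hx, hcrit⟩ := hα
      obtain ⟨s, l, hs, rfl⟩ := exists_polar hx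
      exact ⟨s, l, hs, fun _ => by simpa only [mon_polar] using hcrit⟩
    · exact ⟨fun _ => 1, 0, by simp, fun h => absurd h hα⟩
  choose s l hs hcrit using hpolar
  let dl : (Fin n → ℝ) → Fin N → ℝ := fun l j => ∑ i, l i * (a j i : ℝ)
  -- the index of the dominant monomial
  obtain ⟨j₀, hj₀F, hj₀⟩ : ∃ j₀ ∈ F, ∀ᶠ α in (𝒰 : Filter (Fin n → ℂ)),
      ∀ j ∈ F, dl (l α) j ≤ dl (l α) j₀ := by
    have : ∀ᶠ α in (𝒰 : Filter (Fin n → ℂ)), ∃ j₀ ∈ F, ∀ j ∈ F, dl (l α) j ≤ dl (l α) j₀ :=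
      Filter.Eventually.of_forall fun α => Finset.exists_max_image F _ hF.1
    have h2 : (⋃ j₀ ∈ (F : Set (Fin N)), {α | ∀ j ∈ F, dl (l α) j ≤ dl (l α) j₀}) ∈ 𝒰 := by
      refine Filter.mem_of_superset this fun α hα => ?_
      simpa using hα
    obtain ⟨j₀, hj₀, h⟩ := (Ultrafilter.finite_biUnion_mem_iff F.finite_toSet).mp h2
    exact ⟨j₀, hj₀, h⟩
  -- the moduli of the monomials, relative to the dominant one, converge
  have hρ : ∀ j, ∃ ρ : ℝ, j ∈ F → Filter.Tendsto
      (fun α => Real.exp (dl (l α) j - dl (l α) j₀)) 𝒰 (nhds ρ) := by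
    intro j
    by_cases hj : j ∈ F
    · have hmem : Set.Icc (0 : ℝ) 1 ∈
          (𝒰.map fun α => Real.exp (dl (l α) j - dl (l α) j₀)) := by
        rw [Ultrafilter.mem_map]
        filter_upwards [hj₀] with α hα
        exact ⟨(Real.exp_pos _).le, Real.exp_le_one_iff.mpr (sub_nonpos.mpr (hα j hj))⟩
      obtain ⟨ρ, -, h⟩ := (isCompact_Icc (a := (0 : ℝ)) (b := 1)).ultrafilter_le_nhds' _ hmem
      exact ⟨ρ, fun _ => h⟩
    · exact ⟨0, fun h => absurd h hj⟩
  choose ρ hρ using hρ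
  have hρ0 : ∀ j ∈ F, 0 ≤ ρ j := fun j hj =>
    ge_of_tendsto' (hρ j hj) fun α => (Real.exp_pos _).le
  -- the phases converge
  obtain ⟨t, ht, hst⟩ : ∃ t : Fin n → ℂ, (∀ i, ‖t i‖ = 1) ∧ Filter.Tendsto s 𝒰 (nhds t) := by
    have hmem : (Set.univ.pi fun _ : Fin n => Metric.sphere (0 : ℂ) 1) ∈ 𝒰.map s := by
      rw [Ultrafilter.mem_map]
      refine Filter.univ_mem' fun α => ?_
      simp [hs]
    obtain ⟨t, ht, h⟩ := (isCompact_univ_pi fun _ : Fin n =>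
      isCompact_sphere (0 : ℂ) 1).ultrafilter_le_nhds' _ hmem
    exact ⟨t, fun i => by simpa using ht i trivial, h⟩
  let F' : Finset (Fin N) := F.filter fun j => ρ j ≠ 0
  have hρj₀ : ρ j₀ = 1 := by
    refine tendsto_nhds_unique (hρ j₀ hj₀F) ?_
    simp
  have hj₀F' : j₀ ∈ F' := by simp [F', hj₀F, hρj₀]
  let π : (Fin n → ℝ) →ₗ[ℝ] (Fin N → ℝ) :=
    { toFun := fun l j => if j ∈ F' then dl l j - dl l j₀ else 0
      map_add' := by
        intro x y
        ext j
        by_cases hj : j ∈ F' <;> simp [hj, dl, add_mul, Finset.sum_add_distrib]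
        ring
      map_smul' := by
        intro c x
        ext j
        by_cases hj : j ∈ F' <;> simp [hj, dl, mul_assoc, ← Finset.mul_sum, mul_sub] }
  have hπ : ∀ l j, j ∈ F' → π l j = dl l j - dl l j₀ := by
    intro l j hj
    change (if j ∈ F' then dl l j - dl l j₀ else 0) = _
    rw [if_pos hj]
  obtain ⟨g, hg⟩ := exists_generalized_inverse π
  -- `u α` is a bounded vector with the same pairings as `l α` along the limit face
  let u : (Fin n → ℂ) → Fin n → ℝ := fun α => g (π (l α))
  have hu : ∀ α, ∀ j ∈ F', dl (u α) j - dl (u α) j₀ = dl (l α) j - dl (l α) j₀ := by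
    intro α j hj
    rw [← hπ _ j hj, ← hπ _ j hj, hg]
  have hlim : Filter.Tendsto (fun α => π (l α)) 𝒰
      (nhds fun j => if j ∈ F' then Real.log (ρ j) else 0) := by
    rw [tendsto_pi_nhds]
    intro j
    by_cases hj : j ∈ F'
    · have hjF := Finset.mem_filter.mp hj
      simp only [if_pos hj, hπ _ j hj]
      have := (hρ j hjF.1).log hjF.2
      simpa using this
    · have : ∀ l, π l j = 0 := fun l => if_neg hj
      simp [this, hj]
  obtain ⟨u', hu'⟩ : ∃ u', Filter.Tendsto u 𝒰 (nhds u') :=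
    ⟨_, ((LinearMap.continuous_of_finiteDimensional g).tendsto _).comp hlim⟩
  have hdl : ∀ j, Continuous fun l : Fin n → ℝ => dl l j := fun j => by
    simp only [dl]; fun_prop
  have hdlu : ∀ j, Filter.Tendsto (fun α => dl (u α) j - dl (u α) j₀) 𝒰
      (nhds (dl u' j - dl u' j₀)) := fun j =>
    (((hdl j).tendsto _).comp hu').sub (((hdl j₀).tendsto _).comp hu')
  have hρu : ∀ j ∈ F', ρ j = Real.exp (dl u' j - dl u' j₀) := by
    intro j hj
    refine tendsto_nhds_unique (hρ j (Finset.mem_filter.mp hj).1) ?_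
    have := (hdlu j).rexp
    simpa only [hu _ j hj] using this
  -- for `α` far along the ultrafilter, `u α - l α` has constant pairing on the limit face and a larger one on the rest of `F`
  have hface : IsFace a F' := by
    have hev : ∀ᶠ α in (𝒰 : Filter (Fin n → ℂ)), ∀ j, j ∈ F → j ∉ F' →
        Real.exp (dl (l α) j - dl (l α) j₀) < Real.exp (dl (u α) j - dl (u α) j₀) := by
      rw [Filter.eventually_all]
      intro j
      by_cases hj : j ∈ F ∧ j ∉ F'
      · have hz : ρ j = 0 := by
          by_contra h
          exact hj.2 (Finset.mem_filter.mpr ⟨hj.1, h⟩)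
        have h1 := hρ j hj.1
        rw [hz] at h1
        filter_upwards [h1.eventually_lt (hdlu j).rexp (Real.exp_pos _)] with α hα _ _ using hα
      · exact Filter.Eventually.of_forall fun _ h h' => absurd ⟨h, h'⟩ hj
    obtain ⟨α, hα⟩ := hev.exists
    have hsum : ∀ j, ∑ i, (u α i - l α i) * (a j i : ℝ) = dl (u α) j - dl (l α) j := by
      intro j; simp [dl, sub_mul, Finset.sum_sub_distrib]
    refine hF.subface (Finset.filter_subset _ _) hj₀F' (fun i => u α i - l α i) ?_ ?_
    · intro j hj
      rw [hsum, hsum]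
      linarith [hu α j hj]
    · intro j hj hj'
      rw [hsum, hsum]
      have := Real.exp_lt_exp.mp (hα j hj hj')
      linarith
  refine hnd F' hface ⟨fun i => t i * Complex.exp (u' i), fun i => ?_, fun i => ?_⟩
  · refine mul_ne_zero ?_ (Complex.exp_ne_zero _)
    rw [← norm_ne_zero_iff, ht]
    exact one_ne_zero
  · have ht0 : ∀ i, t i ≠ 0 := fun i => by
      rw [← norm_ne_zero_iff, ht]
      exact one_ne_zero
    have hpc : ∀ j, Filter.Tendsto (fun α => pcoef z bv α j) 𝒰 (nhds (z j)) := by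
      intro j
      have hc : Continuous fun α => pcoef z bv α j := by
        simp only [pcoef]
        refine continuous_const.sub (continuous_finsetSum _ fun i _ => ?_)
        by_cases h : bv i = j
        · simpa [h] using continuous_apply i
        · simpa [h] using continuous_const
      have := (hc.tendsto 0).mono_left h𝒰
      simpa [pcoef] using this
    have hT : Filter.Tendsto (fun α => ∑ j ∈ F, pcoef z bv α j * a j i *
        (mon (a j) (s α) * (Real.exp (dl (l α) j - dl (l α) j₀) : ℂ))) 𝒰
        (nhds (∑ j ∈ F, z j * a j i * (mon (a j) t * (ρ j : ℂ)))) := by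
      refine tendsto_finsetSum _ fun j hj => ?_
      refine ((hpc j).mul tendsto_const_nhds).mul (Filter.Tendsto.mul ?_ ?_)
      · exact (continuousAt_mon (a j) ht0).tendsto.comp hst
      · exact (Complex.continuous_ofReal.tendsto _).comp (hρ j hj)
    have hzero : ∀ᶠ α in (𝒰 : Filter (Fin n → ℂ)), ∑ j ∈ F, pcoef z bv α j * a j i *
        (mon (a j) (s α) * (Real.exp (dl (l α) j - dl (l α) j₀) : ℂ)) = 0 := by
      filter_upwards [hW] with α hα
      have h := hcrit α hα i
      rw [← zero_mul (Real.exp (-dl (l α) j₀) : ℂ), ← h, Finset.sum_mul]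
      refine Finset.sum_congr rfl fun j _ => ?_
      rw [sub_eq_add_neg, Real.exp_add]
      push_cast
      simp only [dl]
      push_cast
      ring
    have h0 : ∑ j ∈ F, z j * a j i * (mon (a j) t * (ρ j : ℂ)) = 0 :=
      tendsto_nhds_unique_of_eventuallyEq hT tendsto_const_nhds hzero
    have h1 : ∑ j ∈ F', z j * a j i * (mon (a j) t * (ρ j : ℂ)) = 0 := by
      rw [← h0]
      refine Finset.sum_subset (Finset.filter_subset _ _) fun j hj hj' => ?_
      have : ρ j = 0 := by
        by_contra h
        exact hj' (Finset.mem_filter.mpr ⟨hj, h⟩)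
      simp [this]
    rw [← zero_mul (Real.exp (dl u' j₀) : ℂ), ← h1, Finset.sum_mul]
    refine Finset.sum_congr rfl fun j hj => ?_
    rw [mon_polar, hρu j hj, mul_assoc (z j * _), mul_assoc (mon _ _), ← Complex.ofReal_mul,
      ← Real.exp_add, sub_add_cancel]

/-! ### Bad parameters as projections of algebraic sets -/

/-- Polynomials in the parameters `α`, the coordinates `x` and the inverse coordinates `x⁻¹`. -/
abbrev TPoly (n : ℕ) : Type := MvPolynomial (Fin n ⊕ (Fin n ⊕ Fin n)) ℂ

/-- The point `(α, x, x⁻¹)`. -/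
def tpt {n : ℕ} (α x : Fin n → ℂ) : Fin n ⊕ (Fin n ⊕ Fin n) → ℂ :=
  Sum.elim α (Sum.elim x fun i => (x i)⁻¹)

/-- The equations `x_i x_i⁻¹ = 1` defining the torus. -/
def torusRel (n : ℕ) : Set (TPoly n) :=
  Set.range fun i : Fin n => MvPolynomial.X (Sum.inr (Sum.inl i)) *
    MvPolynomial.X (Sum.inr (Sum.inr i)) - 1

/-- The Laurent monomial `x^m` as a polynomial in `x` and `x⁻¹`. -/
def monP {n : ℕ} (m : Fin n → ℤ) : TPoly n :=
  ∏ i, MvPolynomial.X (Sum.inr (Sum.inl i)) ^ (m i).toNat *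
    MvPolynomial.X (Sum.inr (Sum.inr i)) ^ (-m i).toNat

/-- The perturbed coefficient as a polynomial in `α`. -/
def coefP {n N : ℕ} (z : Fin N → ℂ) (bv : Fin n → Fin N) (j : Fin N) : TPoly n :=
  MvPolynomial.C (z j) - ∑ i, if bv i = j then MvPolynomial.X (Sum.inl i) else 0

theorem eval_monP {n : ℕ} (m : Fin n → ℤ) (α : Fin n → ℂ) {x : Fin n → ℂ}
    (hx : ∀ i, x i ≠ 0) : MvPolynomial.eval (tpt α x) (monP m) = mon m x := by
  simp only [monP, map_prod, map_mul, map_pow, MvPolynomial.eval_X, tpt, Sum.elim_inr,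
    Sum.elim_inl, mon]
  refine Finset.prod_congr rfl fun i _ => ?_
  rw [← zpow_natCast, ← zpow_natCast, inv_zpow', ← zpow_add₀ (hx i)]
  congr 1
  omega

theorem eval_coefP {n N : ℕ} (z : Fin N → ℂ) (bv : Fin n → Fin N) (j : Fin N)
    (α x : Fin n → ℂ) : MvPolynomial.eval (tpt α x) (coefP z bv j) = pcoef z bv α j := by
  simp only [coefP, pcoef, map_sub, MvPolynomial.eval_C, map_sum]
  congr 1
  refine Finset.sum_congr rfl fun i _ => ?_
  split_ifs <;> simp [tpt]

theorem mem_projSet_torusRel {n : ℕ} (E : Set (TPoly n)) (α : Fin n → ℂ) :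
    α ∈ projSet (torusRel n ∪ E) ↔ ∃ x : Fin n → ℂ, (∀ i, x i ≠ 0) ∧
      ∀ f ∈ E, MvPolynomial.eval (tpt α x) f = 0 := by
  constructor
  · rintro ⟨t, ht⟩
    have h1 : ∀ i, t (Sum.inl i) * t (Sum.inr i) = 1 := by
      intro i
      have := ht _ (Or.inl ⟨i, rfl⟩)
      simpa [sub_eq_zero] using this
    have ht' : Sum.elim α t = tpt α fun i => t (Sum.inl i) := by
      ext s
      rcases s with i | i | i
      · rfl
      · rfl
      · exact eq_inv_of_mul_eq_one_right (h1 i)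
    exact ⟨fun i => t (Sum.inl i), fun i => left_ne_zero_of_mul_eq_one (h1 i),
      fun f hf => ht' ▸ ht f (Or.inr hf)⟩
  · rintro ⟨x, hx, hE⟩
    refine ⟨Sum.elim x fun i => (x i)⁻¹, ?_⟩
    rintro f (⟨i, rfl⟩ | hf)
    · simp [hx i]
    · exact hE f hf

/-- The critical point equations of the part of the perturbed polynomial supported on `F`. -/
def critEqs {n N : ℕ} (a : Fin N → Fin n → ℤ) (z : Fin N → ℂ) (bv : Fin n → Fin N)
    (F : Finset (Fin N)) : Set (TPoly n) :=
  Set.range fun i : Fin n =>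
    ∑ j ∈ F, coefP z bv j * MvPolynomial.C (a j i : ℂ) * monP (a j)

/-- The logarithmic Hessian of the perturbed polynomial, as a matrix of polynomials. -/
def logHessP {n N : ℕ} (a : Fin N → Fin n → ℤ) (z : Fin N → ℂ) (bv : Fin n → Fin N) :
    Matrix (Fin n) (Fin n) (TPoly n) :=
  Matrix.of fun j k => ∑ l, coefP z bv l * MvPolynomial.C (a l k : ℂ) *
    MvPolynomial.C (a l j : ℂ) * monP (a l)

theorem eval_critEqs {n N : ℕ} (a : Fin N → Fin n → ℤ) (z : Fin N → ℂ) (bv : Fin n → Fin N)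
    (F : Finset (Fin N)) (α : Fin n → ℂ) {x : Fin n → ℂ} (hx : ∀ i, x i ≠ 0) :
    (∀ f ∈ critEqs a z bv F, MvPolynomial.eval (tpt α x) f = 0) ↔
      ∀ i, ∑ j ∈ F, pcoef z bv α j * a j i * mon (a j) x = 0 := by
  simp [critEqs, eval_coefP, eval_monP _ _ hx]

theorem eval_det_logHessP {n N : ℕ} (a : Fin N → Fin n → ℤ) (z : Fin N → ℂ)
    (bv : Fin n → Fin N) (α : Fin n → ℂ) {x : Fin n → ℂ} (hx : ∀ i, x i ≠ 0) :
    MvPolynomial.eval (tpt α x) (logHessP a z bv).det = (logHess a (pcoef z bv α) x).det := by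
  rw [RingHom.map_det]
  congr 1
  ext j k
  simp [logHessP, logHess, eval_coefP, eval_monP _ _ hx]

theorem hasCrit_eq_projSet {n N : ℕ} (a : Fin N → Fin n → ℤ) (z : Fin N → ℂ)
    (bv : Fin n → Fin N) (F : Finset (Fin N)) :
    {α | HasCrit a (pcoef z bv α) F} = projSet (torusRel n ∪ critEqs a z bv F) := by
  ext α
  rw [mem_projSet_torusRel]
  exact exists_congr fun x => and_congr_right fun hx => (eval_critEqs a z bv F α hx).symm

theorem critVals_eq_projSet {n N : ℕ} (a : Fin N → Fin n → ℤ) (z : Fin N → ℂ)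
    (bv : Fin n → Fin N) :
    critVals a z bv =
      projSet (torusRel n ∪ (critEqs a z bv Finset.univ ∪ {(logHessP a z bv).det})) := by
  ext α
  rw [mem_projSet_torusRel]
  refine exists_congr fun x => and_congr_right fun hx => ?_
  rw [← eval_critEqs a z bv Finset.univ α hx, ← eval_det_logHessP a z bv α hx]
  simp only [Set.mem_union, Set.mem_singleton_iff, or_imp, forall_and, forall_eq]

/-- The parameters with a degenerate critical point lie in a hypersurface: by Sard's theorem
they form a null set, which cannot contain a nonempty Zariski-open set. -/
theorem exists_poly_critVals {n N : ℕ} (a : Fin N → Fin n → ℤ) (z : Fin N → ℂ)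
    (bv : Fin n → Fin N)
    (hbv : LinearIndependent ℝ fun i => fun j => (a (bv i) j : ℝ)) :
    ∃ P : MvPolynomial (Fin n) ℂ, P ≠ 0 ∧
      ∀ α ∈ critVals a z bv, MvPolynomial.eval α P = 0 := by
  have h0 := volume_critVals a z bv hbv
  rw [critVals_eq_projSet] at h0 ⊢
  rcases projSet_dichotomy
    (torusRel n ∪ (critEqs a z bv Finset.univ ∪ {(logHessP a z bv).det})) with h | ⟨P, hP, h⟩
  · exact h
  · exact absurd (measure_mono_null h h0)
      ((isOpen_nonvanishing P).measure_pos volume (dense_nonvanishing hP).nonempty).ne'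

/-- The parameters for which the part on a given face degenerates lie in a hypersurface,
since `0` is not in their closure. -/
theorem exists_poly_face {n N : ℕ} {a : Fin N → Fin n → ℤ} {z : Fin N → ℂ}
    (hnd : NonDeg a z) (bv : Fin n → Fin N) {F : Finset (Fin N)} (hF : IsFace a F) :
    ∃ P : MvPolynomial (Fin n) ℂ, P ≠ 0 ∧
      ∀ α, HasCrit a (pcoef z bv α) F → MvPolynomial.eval α P = 0 := by
  have h0 := zero_notMem_closure bv hF ((nonDeg_iff a z).mp hnd)
  rcases projSet_dichotomy (torusRel n ∪ critEqs a z bv F) with ⟨P, hP, h⟩ | ⟨P, hP, h⟩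
  · rw [← hasCrit_eq_projSet] at h
    exact ⟨P, hP, h⟩
  · rw [← hasCrit_eq_projSet] at h
    exact absurd (closure_mono h (dense_nonvanishing hP 0)) h0

/-- if `h_z` is non-degenerate and `b(1), …, b(n) ∈ A` form a basis of `ℝ^n`,
then for all `α` in some open dense subset of `ℂ^n` the perturbation
`h̃(x) = h_z(x) − ∑ i, α i * x^{b(i)}` is non-degenerate and has only
non-degenerate critical points in `T = (ℂ*)^n`. -/
theorem stmt0 {n N : ℕ} (a : Fin N → Fin n → ℤ) (z : Fin N → ℂ)
    (hnd : NonDeg a z)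
    (bv : Fin n → Fin N)
    (hbv : LinearIndependent ℝ fun i => fun j => (a (bv i) j : ℝ)) :
    ∃ U : Set (Fin n → ℂ), IsOpen U ∧ Dense U ∧
      ∀ α ∈ U,
        NonDeg a (fun j => z j - ∑ i, if bv i = j then α i else 0) ∧
        ∀ x : Fin n → ℂ, (∀ i, x i ≠ 0) →
          (∀ i, pd i (laurent a fun j => z j - ∑ i', if bv i' = j then α i' else 0) x = 0) →
          hessDet (laurent a fun j => z j - ∑ i', if bv i' = j then α i' else 0) x ≠ 0 := by
  obtain ⟨P₀, hP₀, hcv⟩ := exists_poly_critVals a z bv hbv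
  have hface : ∀ F : Finset (Fin N), ∃ P : MvPolynomial (Fin n) ℂ, P ≠ 0 ∧
      (IsFace a F → ∀ α, HasCrit a (pcoef z bv α) F → MvPolynomial.eval α P = 0) := by
    intro F
    by_cases hF : IsFace a F
    · obtain ⟨P, hP, h⟩ := exists_poly_face hnd bv hF
      exact ⟨P, hP, fun _ => h⟩
    · exact ⟨1, one_ne_zero, fun h => absurd h hF⟩
  choose P hP hPF using hface
  have hQ : P₀ * ∏ F, P F ≠ 0 :=
    mul_ne_zero hP₀ (Finset.prod_ne_zero_iff.mpr fun F _ => hP F)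
  refine ⟨_, isOpen_nonvanishing _, dense_nonvanishing hQ, fun α hα => ?_⟩
  have hα' : MvPolynomial.eval α (P₀ * ∏ F, P F) ≠ 0 := hα
  rw [map_mul, map_prod] at hα'
  refine ⟨(nonDeg_iff a (pcoef z bv α)).mpr fun F hF hcrit => ?_, fun x hx hcrit hdet => ?_⟩
  · exact Finset.prod_ne_zero_iff.mp (right_ne_zero_of_mul hα') F (Finset.mem_univ F)
      (hPF F hF α hcrit)
  · exact left_ne_zero_of_mul hα' (hcv α ⟨x, hx,
      fun i => (pd_laurent_eq_zero_iff a (pcoef z bv α) i hx).mp (hcrit i),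
      det_logHess_eq_zero a (pcoef z bv α) hx hcrit hdet⟩)
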